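/- Fix integers k, m ≥ 1. The multipliers of C at the roots of p are C′(0) = (k−1)(2k−1)/(2k²) and C′(1) = (m−1)(2m−1)/(2m²); moreover 0 ≤ (k−1)(2k−1)/(2k²) < 1 and 0 ≤ (m−1)(2m−1)/(2m²) < 1, so both roots of p are attracting fixed points of C. -/

import Mathlib

/-!
Near a fixed point `a`, write the map as `x ↦ x - (x - a) g(x)` with `g` continuous at `a`; its
multiplier there is `1 - g(a)`, which at the root `0` is a direct evaluation. The reflection
`x ↦ 1 - x` swaps the two roots and hence conjugates Chebyshev's method for `z^k (z - 1)^m` to the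
one for `z^m (z - 1)^k`, so the multiplier at `1` follows by exchanging `k` and `m`.
-/

/-- The quadratic factor `E` in the numerator of Chebyshev's method for `z ^ k * (z - 1) ^ m`, with
arbitrary scalars as exponents. -/
def chebyshevQuadratic {R : Type*} [CommRing R] (k m x : R) : R :=
  (k + m) * (3 * k + 3 * m - 1) * x ^ 2 - 2 * k * (3 * k + 3 * m - 1) * x + (3 * k ^ 2 - k)

/-- Chebyshev's method for `z ^ k * (z - 1) ^ m`, with arbitrary scalars as exponents. At the pole
`(k + m) * x = k` its value is `x`, because `y / 0 = 0`. -/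
def chebyshevMap {𝕜 : Type*} [Field 𝕜] (k m x : 𝕜) : 𝕜 :=
  x - x * (x - 1) * chebyshevQuadratic k m x / (2 * ((k + m) * x - k) ^ 3)

/-- The multiplier of Chebyshev's method at a root of multiplicity `n`, with an arbitrary scalar as
multiplicity. -/
def chebyshevMultiplier {𝕜 : Type*} [Field 𝕜] (n : 𝕜) : 𝕜 :=
  (n - 1) * (2 * n - 1) / (2 * n ^ 2)

section Multiplier

variable {𝕜 : Type*} [Field 𝕜] [LinearOrder 𝕜] [IsStrictOrderedRing 𝕜] {n : 𝕜}

theorem chebyshevMultiplier_nonneg (hn : 1 ≤ n) : 0 ≤ chebyshevMultiplier n :=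
  div_nonneg (mul_nonneg (by linarith) (by linarith)) (by positivity)

theorem chebyshevMultiplier_lt_one (hn : 1 / 3 < n) : chebyshevMultiplier n < 1 := by
  have : 0 < n := by linarith
  rw [chebyshevMultiplier, div_lt_one (by positivity)]
  calc (n - 1) * (2 * n - 1) = 2 * n ^ 2 - (3 * n - 1) := by ring
    _ < 2 * n ^ 2 := by linarith

end Multiplier

theorem chebyshevQuadratic_one_sub {R : Type*} [CommRing R] (k m x : R) :
    chebyshevQuadratic k m (1 - x) = chebyshevQuadratic m k x := by
  unfold chebyshevQuadratic
  ring

theorem chebyshevMap_one_sub {𝕜 : Type*} [Field 𝕜] (k m x : 𝕜) :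
    chebyshevMap k m (1 - x) = 1 - chebyshevMap m k x := by
  have hden : 2 * ((k + m) * (1 - x) - k) ^ 3 = -(2 * ((m + k) * x - m) ^ 3) := by ring
  rw [chebyshevMap, chebyshevMap, chebyshevQuadratic_one_sub, hden, div_neg]
  ring

section Derivative

variable {𝕜 : Type*} [NontriviallyNormedField 𝕜]

theorem hasDerivAt_sub_smul_of_continuousAt {E : Type*} [NormedAddCommGroup E] [NormedSpace 𝕜 E]
    {g : 𝕜 → E} {a : 𝕜} (hg : ContinuousAt g a) :
    HasDerivAt (fun x => (x - a) • g x) (g a) a := by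
  rw [hasDerivAt_iff_tendsto_slope]
  refine (hg.tendsto.mono_left nhdsWithin_le_nhds).congr' ?_
  filter_upwards [self_mem_nhdsWithin] with x hx
  have hxa : x - a ≠ 0 := sub_ne_zero.mpr hx
  simp [slope_def_module, hxa]

variable [NeZero (2 : 𝕜)]

theorem hasDerivAt_chebyshevMap_zero {k : 𝕜} (hk : k ≠ 0) (m : 𝕜) :
    HasDerivAt (chebyshevMap k m) (chebyshevMultiplier k) 0 := by
  have htwo : (2 : 𝕜) ≠ 0 := two_ne_zero
  let g : 𝕜 → 𝕜 := fun x => (x - 1) * chebyshevQuadratic k m x / (2 * ((k + m) * x - k) ^ 3)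
  have hg : ContinuousAt g 0 := by
    unfold g chebyshevQuadratic
    refine ContinuousAt.div (by fun_prop) (by fun_prop) ?_
    simpa [htwo] using hk
  have hg_zero : 1 - g 0 = chebyshevMultiplier k := by
    simp only [g, chebyshevQuadratic, chebyshevMultiplier, mul_zero, zero_sub]
    field_simp
    ring
  have hmap : chebyshevMap k m = fun x => x - (x - 0) • g x := by
    funext x
    simp only [chebyshevMap, g, smul_eq_mul]
    ring
  rw [hmap, ← hg_zero]
  exact (hasDerivAt_id' 0).fun_sub (hasDerivAt_sub_smul_of_continuousAt hg)

theorem hasDerivAt_chebyshevMap_one (k : 𝕜) {m : 𝕜} (hm : m ≠ 0) :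
    HasDerivAt (chebyshevMap k m) (chebyshevMultiplier m) 1 := by
  have hreflect : HasDerivAt (fun x => chebyshevMap m k (1 - x)) (-chebyshevMultiplier m) 1 :=
    HasDerivAt.comp_const_sub 1 1 (by simpa using hasDerivAt_chebyshevMap_zero hm k)
  simpa [chebyshevMap_one_sub] using hreflect.const_sub 1

end Derivative

theorem roots_are_attracting_general {k m : ℝ} (hk : 1 ≤ k) (hm : 1 ≤ m) {C : ℝ → ℝ}
    (hC : ∀ x, x ≠ k / (k + m) → C x = chebyshevMap k m x) :
    HasDerivAt C (chebyshevMultiplier k) 0 ∧ HasDerivAt C (chebyshevMultiplier m) 1 ∧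
      chebyshevMultiplier k ∈ Set.Ico 0 1 ∧ chebyshevMultiplier m ∈ Set.Ico 0 1 := by
  have hC_deriv {a c : ℝ} (ha : a ≠ k / (k + m)) (h : HasDerivAt (chebyshevMap k m) c a) :
      HasDerivAt C c a :=
    h.congr_of_eventuallyEq ((eventually_ne_nhds ha).mono hC)
  have hmultiplier {n : ℝ} (hn : 1 ≤ n) : chebyshevMultiplier n ∈ Set.Ico 0 1 :=
    ⟨chebyshevMultiplier_nonneg hn, chebyshevMultiplier_lt_one (by linarith)⟩
  have hpole_pos : 0 < k / (k + m) := by positivity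
  have hpole_lt_one : k / (k + m) < 1 := by
    rw [div_lt_one (by positivity)]
    linarith
  exact ⟨hC_deriv hpole_pos.ne (hasDerivAt_chebyshevMap_zero (by positivity) m),
    hC_deriv hpole_lt_one.ne' (hasDerivAt_chebyshevMap_one k (by positivity)),
    hmultiplier hk, hmultiplier hm⟩

/-- For `k, m ≥ 1`, the multipliers of the Chebyshev map `C` for `z^k(z-1)^m` at the roots
`0` and `1` of `p` are `(k-1)(2k-1)/(2k²)` and `(m-1)(2m-1)/(2m²)` respectively; both lie
in `[0, 1)`, so both roots are attracting fixed points of `C`. -/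
theorem roots_are_attracting (k m : ℕ) (hk : 1 ≤ k) (hm : 1 ≤ m)
    (C : ℝ → ℝ)
    (hC : ∀ x : ℝ, x ≠ (k : ℝ) / ((k : ℝ) + m) →
      C x = x - x * (x - 1) *
        (((k : ℝ) + m) * (3 * k + 3 * m - 1) * x ^ 2 - 2 * k * (3 * k + 3 * m - 1) * x
          + (3 * (k : ℝ) ^ 2 - k)) / (2 * (((k : ℝ) + m) * x - k) ^ 3)) :
    deriv C 0 = ((k : ℝ) - 1) * (2 * k - 1) / (2 * (k : ℝ) ^ 2) ∧
    deriv C 1 = ((m : ℝ) - 1) * (2 * m - 1) / (2 * (m : ℝ) ^ 2) ∧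
    0 ≤ ((k : ℝ) - 1) * (2 * k - 1) / (2 * (k : ℝ) ^ 2) ∧
    ((k : ℝ) - 1) * (2 * k - 1) / (2 * (k : ℝ) ^ 2) < 1 ∧
    0 ≤ ((m : ℝ) - 1) * (2 * m - 1) / (2 * (m : ℝ) ^ 2) ∧
    ((m : ℝ) - 1) * (2 * m - 1) / (2 * (m : ℝ) ^ 2) < 1 := by
  obtain ⟨hzero, hone, hk_mem, hm_mem⟩ :=
    roots_are_attracting_general (Nat.one_le_cast.mpr hk) (Nat.one_le_cast.mpr hm) hC
  exact ⟨hzero.deriv, hone.deriv, hk_mem.1, hk_mem.2, hm_mem.1, hm_mem.2⟩
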